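/- arXiv:2408.03607 — 3 statements merged into one kernel-verified Lean document; each statement's English description precedes it below -/
import Mathlib

section
/- Suppose ε₀ > 0, β ∈ (0,1), C > 0 and h : ℝ → (ℝ² → ℝ²) are such that for every ε ∈ (−ε₀, ε₀): the map h ε is continuous and 2πℤ²-periodic (h ε (x + 2πm) = h ε x for all m ∈ ℤ²), h 0 = 0, the map x ↦ h ε x is β-Hölder continuous with constant C, for each fixed x ∈ ℝ² the map ε ↦ h ε x is real-analytic on (−ε₀, ε₀), and the conjugacy condition holds: for all x ∈ ℝ², (S₀x + h ε (S₀x)) − (S₀(x + h ε x) − ε f(x + h ε x)) ∈ 2πℤ² (so that H_ε(πx) := π(x + h ε x) satisfies H_ε ∘ S = S_ε ∘ H_ε). For t > 0 define V_ε(x,t) := (t v₋ + h ε(x + t v₋) − h ε x)/t and V₊(x,t) := V_ε(x,t)·v₊, V₋(x,t) := V_ε(x,t)·v₋. Then there exists D ∈ (0, ε₀] such that for every ε with |ε| < D and every x ∈ ℝ², the limit lim_{t→0⁺} V₊(x,t)/V₋(x,t) exists in ℝ. -/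
/-!
Fix a small `ε`, put `H x = x + h ε x` and `Δ(x,t) = H (x + t v₋) - H x`, and let `(u, w)` be the
coordinates of `Δ` in the orthonormal basis `(v₊, v₋)`. The claim is that `u / w` converges as
`t → 0`.

The integer vector in the conjugacy condition depends continuously on `x`, so it is constant, and
differences satisfy `Δ(S₀ x, λ₋ t) = S₀ Δ(x,t) - (G (H x + Δ) - G (H x))` with `G = ε f`
exactly (`conj_sub`). The oscillation of `h ε` is bounded, by periodicity and the Hölder bound, and
for `ε` small both coordinates of `G` have Lipschitz constant at most `1/20`.

* Cone condition (`cone`): `|u| ≤ |w|`. Where `|u| > |w|`, one step of the dynamics stays in this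
  unstable cone and multiplies `|u|` by at least `1.4`, while `u` is bounded.
* Nonvanishing (`w_ne_zero`): `w ≠ 0` for `t ≠ 0`. For `|t|` large this is the boundedness of the
  oscillation of `h`, and by the cone condition it is inherited from `(x, t)` to `(S₀ x, λ₋ t)`.
* Contraction (`osc_step`): to first order, the ratio at `(x, t)` is the image of the ratio at
  `(S₀ x, λ₋ t)` under a projective map depending only on `x`, which contracts by `1/2`. Hence, if
  the oscillation of `u / w` near `t = 0` is at most `η` at every base point, it is at most `3η/4`
  at every base point. Iterating, the ratio is Cauchy as `t → 0`.
-/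

noncomputable section
open Real Filter Metric

/-- The two–torus `ℝ²/(2πℤ²)`. -/
abbrev T2 := AddCircle (2 * Real.pi) × AddCircle (2 * Real.pi)

/-- The quotient map `π : ℝ² → T²`. -/
def pr2 : ℝ × ℝ → T2 := fun p => ((p.1 : AddCircle (2 * Real.pi)), (p.2 : AddCircle (2 * Real.pi)))

/-- The matrix `[[1,1],[1,0]]` acting on `ℝ²`. -/
def S0 : ℝ × ℝ → ℝ × ℝ := fun p => (p.1 + p.2, p.1)

def lamP : ℝ := (1 + Real.sqrt 5) / 2
def lamM : ℝ := (1 - Real.sqrt 5) / 2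

/-- Unit eigenvector of `S0` proportional to `(λ₊, 1)`. -/
def vP : ℝ × ℝ := (lamP / Real.sqrt (lamP ^ 2 + 1), 1 / Real.sqrt (lamP ^ 2 + 1))
/-- Unit eigenvector of `S0` proportional to `(λ₋, 1)`. -/
def vM : ℝ × ℝ := (lamM / Real.sqrt (lamM ^ 2 + 1), 1 / Real.sqrt (lamM ^ 2 + 1))

/-- Euclidean dot product on `ℝ²`. -/
def dot (a b : ℝ × ℝ) : ℝ := a.1 * b.1 + a.2 * b.2

/-- `g : ℝ² → ℝ` is a (real-valued) trigonometric polynomial. -/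
def IsTrigPoly (g : ℝ × ℝ → ℝ) : Prop :=
  ∃ (s : Finset (ℤ × ℤ)) (c : ℤ × ℤ → ℂ), ∀ p : ℝ × ℝ,
    (g p : ℂ) = ∑ n ∈ s, c n * Complex.exp (Complex.I * ((n.1 : ℂ) * p.1 + (n.2 : ℂ) * p.2))

/-! ### Linear algebra of the eigenbasis -/

lemma lam_bounds : 1.618 < lamP ∧ lamP < 1.6185 ∧ -0.6185 < lamM ∧ lamM < -0.618 := by
  have h1 : (2.236 : ℝ) < Real.sqrt 5 := by
    apply Real.lt_sqrt_of_sq_lt; norm_num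
  have h2 : Real.sqrt 5 < 2.237 := by
    rw [Real.sqrt_lt' (by norm_num)]; norm_num
  unfold lamP lamM
  refine ⟨?_, ?_, ?_, ?_⟩ <;> linarith

lemma lam_sq : lamP ^ 2 = lamP + 1 ∧ lamM ^ 2 = lamM + 1 ∧ lamP * lamM = -1 := by
  have h5 : Real.sqrt 5 ^ 2 = 5 := Real.sq_sqrt (by norm_num)
  unfold lamP lamM
  refine ⟨?_, ?_, ?_⟩ <;> nlinarith

lemma S0_smul_vM (x : ℝ × ℝ) (t : ℝ) : S0 (x + t • vM) = S0 x + (lamM * t) • vM := by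
  have h := lam_sq.2.1
  have hp : (0 : ℝ) < Real.sqrt (lamM ^ 2 + 1) := Real.sqrt_pos.2 (by positivity)
  ext
  · simp only [S0, vM, Prod.fst_add, Prod.snd_add, Prod.smul_fst, Prod.smul_snd, smul_eq_mul]
    field_simp
    linear_combination (-t) * h
  · simp only [S0, vM, Prod.fst_add, Prod.snd_add, Prod.smul_fst, Prod.smul_snd, smul_eq_mul]
    field_simp

lemma dot_S0_vP (a : ℝ × ℝ) : dot (S0 a) vP = lamP * dot a vP := by
  have h := lam_sq.1
  have hp : (0 : ℝ) < Real.sqrt (lamP ^ 2 + 1) := Real.sqrt_pos.2 (by positivity)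
  simp only [S0, vP, dot]
  field_simp
  linear_combination (-a.1) * h

lemma dot_S0_vM (a : ℝ × ℝ) : dot (S0 a) vM = lamM * dot a vM := by
  have h := lam_sq.2.1
  have hp : (0 : ℝ) < Real.sqrt (lamM ^ 2 + 1) := Real.sqrt_pos.2 (by positivity)
  simp only [S0, vM, dot]
  field_simp
  linear_combination (-a.1) * h

lemma dot_vM_vP : dot vM vP = 0 := by
  have h := lam_sq.2.2
  have hp : (0 : ℝ) < Real.sqrt (lamM ^ 2 + 1) := Real.sqrt_pos.2 (by positivity)
  have hp' : (0 : ℝ) < Real.sqrt (lamP ^ 2 + 1) := Real.sqrt_pos.2 (by positivity)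
  simp only [vM, vP, dot]
  field_simp
  linear_combination h

lemma dot_vM_vM : dot vM vM = 1 := by
  have hp : (0 : ℝ) < Real.sqrt (lamM ^ 2 + 1) := Real.sqrt_pos.2 (by positivity)
  have hs := Real.sq_sqrt (show 0 ≤ lamM ^ 2 + 1 by positivity)
  simp only [vM, dot]
  field_simp
  linarith

lemma norm_unit_le (l : ℝ) :
    ‖((l / Real.sqrt (l ^ 2 + 1), 1 / Real.sqrt (l ^ 2 + 1)) : ℝ × ℝ)‖ ≤ 1 := by
  have hp : (0 : ℝ) < Real.sqrt (l ^ 2 + 1) := Real.sqrt_pos.2 (by positivity)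
  rw [Prod.norm_def, sup_le_iff]
  constructor
  · rw [Real.norm_eq_abs, abs_div, abs_of_pos hp, div_le_one hp]
    apply Real.le_sqrt_of_sq_le; rw [sq_abs]; linarith
  · rw [Real.norm_eq_abs, abs_div, abs_of_pos hp, div_le_one hp, abs_one]
    apply Real.le_sqrt_of_sq_le; nlinarith [sq_nonneg l]

lemma norm_vP_le : ‖vP‖ ≤ 1 := norm_unit_le lamP
lemma norm_vM_le : ‖vM‖ ≤ 1 := norm_unit_le lamM

lemma abs_dot_le {a v : ℝ × ℝ} (hv : ‖v‖ ≤ 1) : |dot a v| ≤ 2 * ‖a‖ := by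
  have h1 : |a.1| ≤ ‖a‖ := norm_fst_le a
  have h2 : |a.2| ≤ ‖a‖ := norm_snd_le a
  have h3 : |v.1| ≤ 1 := (norm_fst_le v).trans hv
  have h4 : |v.2| ≤ 1 := (norm_snd_le v).trans hv
  unfold dot
  calc |a.1 * v.1 + a.2 * v.2| ≤ |a.1 * v.1| + |a.2 * v.2| := abs_add_le _ _
    _ = |a.1| * |v.1| + |a.2| * |v.2| := by rw [abs_mul, abs_mul]
    _ ≤ ‖a‖ * 1 + ‖a‖ * 1 := by gcongr
    _ = 2 * ‖a‖ := by ring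

lemma eq_dot (a : ℝ × ℝ) : a = dot a vP • vP + dot a vM • vM := by
  have h3 := lam_sq.2.2
  have hp : (0 : ℝ) < Real.sqrt (lamP ^ 2 + 1) := Real.sqrt_pos.2 (by positivity)
  have hm : (0 : ℝ) < Real.sqrt (lamM ^ 2 + 1) := Real.sqrt_pos.2 (by positivity)
  have hsp := Real.sq_sqrt (show 0 ≤ lamP ^ 2 + 1 by positivity)
  have hsm := Real.sq_sqrt (show 0 ≤ lamM ^ 2 + 1 by positivity)
  ext
  · simp only [vP, vM, dot, Prod.fst_add, Prod.smul_fst, smul_eq_mul]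
    field_simp
    rw [hsp, hsm]
    linear_combination (a.1 * (1 - lamP * lamM) - a.2 * (lamP + lamM)) * h3
  · simp only [vP, vM, dot, Prod.snd_add, Prod.smul_snd, smul_eq_mul]
    field_simp
    rw [hsp, hsm]
    linear_combination (a.2 * (lamP * lamM - 1) - a.1 * (lamP + lamM)) * h3

lemma norm_le_dot (a : ℝ × ℝ) : ‖a‖ ≤ |dot a vP| + |dot a vM| := by
  calc ‖a‖ = ‖dot a vP • vP + dot a vM • vM‖ := by rw [← eq_dot a]
    _ ≤ ‖dot a vP • vP‖ + ‖dot a vM • vM‖ := norm_add_le _ _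
    _ = |dot a vP| * ‖vP‖ + |dot a vM| * ‖vM‖ := by
      rw [norm_smul, norm_smul, Real.norm_eq_abs, Real.norm_eq_abs]
    _ ≤ |dot a vP| * 1 + |dot a vM| * 1 := by
      gcongr
      exacts [norm_vP_le, norm_vM_le]
    _ = _ := by ring

/-! ### The cone condition and nonvanishing of the stable coordinate -/

/-- The displacement `H (x + t v₋) - H x` of `H = id + h` along the stable direction. -/
def disp (h : ℝ × ℝ → ℝ × ℝ) (x : ℝ × ℝ) (t : ℝ) : ℝ × ℝ :=
  t • vM + h (x + t • vM) - h x

/-- Coordinate of the displacement along `v₊`. -/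
def uu (h : ℝ × ℝ → ℝ × ℝ) (x : ℝ × ℝ) (t : ℝ) : ℝ := dot (disp h x t) vP

/-- Coordinate of the displacement along `v₋`. -/
def ww (h : ℝ × ℝ → ℝ × ℝ) (x : ℝ × ℝ) (t : ℝ) : ℝ := dot (disp h x t) vM

lemma dot_add (a b v : ℝ × ℝ) : dot (a + b) v = dot a v + dot b v := by
  simp only [dot, Prod.fst_add, Prod.snd_add]; ring

lemma dot_sub (a b v : ℝ × ℝ) : dot (a - b) v = dot a v - dot b v := by
  simp only [dot, Prod.fst_sub, Prod.snd_sub]; ring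

lemma dot_smul (c : ℝ) (b v : ℝ × ℝ) : dot (c • b) v = c * dot b v := by
  simp only [dot, Prod.smul_fst, Prod.smul_snd, smul_eq_mul]; ring

/-- The conjugacy `H ∘ S₀ = (S₀ - G) ∘ H + const`, in terms of differences, for `H = id + h`. -/
def ConjDiff (G h : ℝ × ℝ → ℝ × ℝ) : Prop :=
  ∀ x y : ℝ × ℝ, (S0 y + h (S0 y)) - (S0 x + h (S0 x)) =
    S0 ((y + h y) - (x + h x)) - (G (y + h y) - G (x + h x))

lemma disp_eq (h : ℝ × ℝ → ℝ × ℝ) (x : ℝ × ℝ) (t : ℝ) :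
    (x + t • vM + h (x + t • vM)) - (x + h x) = disp h x t := by
  unfold disp; abel

lemma disp_step {G h : ℝ × ℝ → ℝ × ℝ} (hc : ConjDiff G h) (x : ℝ × ℝ) (t : ℝ) :
    disp h (S0 x) (lamM * t) =
      S0 (disp h x t) - (G (x + h x + disp h x t) - G (x + h x)) := by
  have e := hc x (x + t • vM)
  rw [disp_eq, S0_smul_vM, disp_eq] at e
  rw [e, ← disp_eq h x t]
  congr 3
  abel

lemma uu_step {G h : ℝ × ℝ → ℝ × ℝ} (hc : ConjDiff G h) (x : ℝ × ℝ) (t : ℝ) :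
    uu h (S0 x) (lamM * t) =
      lamP * uu h x t - dot (G (x + h x + disp h x t) - G (x + h x)) vP := by
  rw [uu, disp_step hc, dot_sub, dot_S0_vP, uu]

lemma ww_step {G h : ℝ × ℝ → ℝ × ℝ} (hc : ConjDiff G h) (x : ℝ × ℝ) (t : ℝ) :
    ww h (S0 x) (lamM * t) =
      lamM * ww h x t - dot (G (x + h x + disp h x t) - G (x + h x)) vM := by
  rw [ww, disp_step hc, dot_sub, dot_S0_vM, ww]

/-- Both coordinates of `G` in the basis `(v₊, v₋)` are Lipschitz with constant `1/20`. -/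
def SmallLip (G : ℝ × ℝ → ℝ × ℝ) : Prop :=
  ∀ y z : ℝ × ℝ, |dot (G y - G z) vP| ≤ 1 / 20 * ‖y - z‖ ∧ |dot (G y - G z) vM| ≤ 1 / 20 * ‖y - z‖

lemma small_disp {G h : ℝ × ℝ → ℝ × ℝ} (hG : SmallLip G) (x : ℝ × ℝ) (t : ℝ) :
    |dot (G (x + h x + disp h x t) - G (x + h x)) vP| ≤ 1 / 20 * (|uu h x t| + |ww h x t|) ∧
    |dot (G (x + h x + disp h x t) - G (x + h x)) vM| ≤ 1 / 20 * (|uu h x t| + |ww h x t|) := by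
  have e := hG (x + h x + disp h x t) (x + h x)
  rw [add_sub_cancel_left] at e
  have n := norm_le_dot (disp h x t)
  unfold uu ww
  exact ⟨e.1.trans (by linarith), e.2.trans (by linarith)⟩

lemma uu_bound {h : ℝ × ℝ → ℝ × ℝ} {B : ℝ} (hB : ∀ x y, ‖h x - h y‖ ≤ B) (x : ℝ × ℝ) (t : ℝ) :
    |uu h x t| ≤ 2 * B := by
  have : uu h x t = dot (h (x + t • vM) - h x) vP := by
    unfold uu disp
    rw [add_sub_assoc, dot_add, dot_smul, dot_vM_vP]; ring
  rw [this]
  exact (abs_dot_le norm_vP_le).trans (by linarith [hB (x + t • vM) x])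

lemma ww_bound {h : ℝ × ℝ → ℝ × ℝ} {B : ℝ} (hB : ∀ x y, ‖h x - h y‖ ≤ B) (x : ℝ × ℝ) (t : ℝ) :
    |ww h x t - t| ≤ 2 * B := by
  have : ww h x t - t = dot (h (x + t • vM) - h x) vM := by
    unfold ww disp
    rw [add_sub_assoc, dot_add, dot_smul, dot_vM_vM]; ring
  rw [this]
  exact (abs_dot_le norm_vM_le).trans (by linarith [hB (x + t • vM) x])

/-- Displacements along the stable direction avoid the unstable cone: there `|u|` would grow
geometrically under the dynamics, against `uu_bound`. -/
lemma cone {G h : ℝ × ℝ → ℝ × ℝ} (hc : ConjDiff G h) (hG : SmallLip G) {B : ℝ}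
    (hB : ∀ x y, ‖h x - h y‖ ≤ B) (x : ℝ × ℝ) (t : ℝ) : |uu h x t| ≤ |ww h x t| := by
  obtain ⟨l1, l2, l3, l4⟩ := lam_bounds
  have key : ∀ n : ℕ, ∀ x t, |ww h x t| < |uu h x t| → |uu h x t| ≤ 2 * B * (5 / 7) ^ n := by
    intro n
    induction n with
    | zero => intro x t _; simpa using uu_bound hB x t
    | succ n ih =>
      intro x t hlt
      have e1 := uu_step hc x t
      have e2 := ww_step hc x t
      obtain ⟨s1, s2⟩ := small_disp (h := h) hG x t
      have g1 : 7 / 5 * |uu h x t| ≤ |uu h (S0 x) (lamM * t)| := by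
        have : |lamP * uu h x t| = lamP * |uu h x t| := by
          rw [abs_mul, abs_of_pos (by linarith)]
        have h2 := abs_sub_abs_le_abs_sub (lamP * uu h x t)
          (dot (G (x + h x + disp h x t) - G (x + h x)) vP)
        rw [← e1, this] at h2
        nlinarith [abs_nonneg (uu h x t)]
      have g2 : |ww h (S0 x) (lamM * t)| ≤ |uu h x t| := by
        have : |lamM * ww h x t| = -lamM * |ww h x t| := by
          rw [abs_mul, abs_of_neg (by linarith)]
        have h2 := abs_sub (lamM * ww h x t)
          (dot (G (x + h x + disp h x t) - G (x + h x)) vM)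
        rw [← e2, this] at h2
        nlinarith [abs_nonneg (uu h x t), abs_nonneg (ww h x t)]
      have hpos : 0 < |uu h x t| := (abs_nonneg _).trans_lt hlt
      have := ih (S0 x) (lamM * t) (by linarith)
      rw [pow_succ]
      linarith
  by_contra hcon
  push Not at hcon
  have hpos : 0 < |uu h x t| := (abs_nonneg _).trans_lt hcon
  have lim : Tendsto (fun n : ℕ => 2 * B * (5 / 7 : ℝ) ^ n) atTop (nhds (2 * B * 0)) :=
    (tendsto_pow_atTop_nhds_zero_of_lt_one (by norm_num) (by norm_num)).const_mul _
  have := ge_of_tendsto' lim (fun n => key n x t hcon)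
  linarith

lemma S0_surj (x : ℝ × ℝ) : ∃ y, S0 y = x :=
  ⟨(x.2, x.1 - x.2), by ext <;> simp [S0]⟩

lemma w_ne_zero {G h : ℝ × ℝ → ℝ × ℝ} (hc : ConjDiff G h) (hG : SmallLip G) {B : ℝ}
    (hB : ∀ x y, ‖h x - h y‖ ≤ B) (x : ℝ × ℝ) {t : ℝ} (ht : t ≠ 0) : ww h x t ≠ 0 := by
  obtain ⟨l1, l2, l3, l4⟩ := lam_bounds
  have hl : |lamM| = -lamM := abs_of_neg (by linarith)
  have key : ∀ n : ℕ, ∀ x t, 2 * B * |lamM| ^ n < |t| → ww h x t ≠ 0 := by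
    intro n
    induction n with
    | zero =>
      intro x t hlt h0
      have := ww_bound hB x t
      rw [h0, zero_sub, abs_neg] at this
      simp at hlt
      linarith
    | succ n ih =>
      intro x t hlt h0
      obtain ⟨y, rfl⟩ := S0_surj x
      have hm : lamM ≠ 0 := by linarith
      obtain ⟨s, rfl⟩ : ∃ s, t = lamM * s := ⟨t / lamM, by field_simp⟩
      rw [pow_succ, abs_mul, mul_comm |lamM|, ← mul_assoc] at hlt
      have hy := ih y s (lt_of_mul_lt_mul_right hlt (abs_nonneg _))
      have e2 := ww_step hc y s
      rw [h0] at e2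
      have s2 := (small_disp (h := h) hG y s).2
      have e3 : lamM * ww h y s = dot (G (y + h y + disp h y s) - G (y + h y)) vM := by linarith
      rw [← e3, abs_mul, hl] at s2
      have c := cone hc hG hB y s
      have := abs_pos.2 hy
      nlinarith
  have lim : Tendsto (fun n : ℕ => 2 * B * |lamM| ^ n) atTop (nhds (2 * B * 0)) :=
    (tendsto_pow_atTop_nhds_zero_of_lt_one (abs_nonneg _) (by linarith)).const_mul _
  rw [mul_zero] at lim
  obtain ⟨n, hn⟩ := (lim.eventually_lt_const (abs_pos.2 ht)).exists
  exact key n x t hn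

/-! ### Contraction of the oscillation of the ratio -/

/-- The fractional-linear relation between the ratio `r` at `(x, t)` and the ratio `r'` at
`(S₀ x, λ₋ t)` contracts from `r'` to `r` by `1/2`, up to the linearization errors `o`, `s`. -/
lemma ratio_contract {a b c d o₁ o₂ s₁ s₂ r₁ r₂ r₁' r₂' ζ : ℝ}
    (ha : |a| ≤ 1 / 20) (hc : |c| ≤ 1 / 20) (hd : |d| ≤ 1 / 20)
    (hζ : ζ ≤ 1 / 50) (ho₁ : |o₁| ≤ ζ) (ho₂ : |o₂| ≤ ζ) (hs₁ : |s₁| ≤ ζ) (hs₂ : |s₂| ≤ ζ)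
    (hr₁ : |r₁| ≤ 1) (hr₂' : |r₂'| ≤ 1)
    (e₁ : lamP * r₁ = (a * r₁ + b + o₁) + r₁' * (lamM - (c * r₁ + d + s₁)))
    (e₂ : lamP * r₂ = (a * r₂ + b + o₂) + r₂' * (lamM - (c * r₂ + d + s₂))) :
    |r₁ - r₂| ≤ 1 / 2 * |r₁' - r₂'| + 4 * ζ := by
  obtain ⟨l1, l2, l3, l4⟩ := lam_bounds
  have e : lamP * (r₁ - r₂) = a * (r₁ - r₂) + (o₁ - o₂) +
      (r₁' - r₂') * (lamM - (c * r₁ + d + s₁)) - r₂' * (c * (r₁ - r₂) + (s₁ - s₂)) := by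
    linear_combination e₁ - e₂
  have h1 : |a * (r₁ - r₂)| ≤ 1 / 20 * |r₁ - r₂| := by
    rw [abs_mul]; gcongr
  have h2 : |o₁ - o₂| ≤ 2 * ζ := (abs_sub _ _).trans (by linarith)
  have h2' : |s₁ - s₂| ≤ 2 * ζ := (abs_sub _ _).trans (by linarith)
  have h3 : |c * r₁| ≤ 1 / 20 := by
    rw [abs_mul]
    calc |c| * |r₁| ≤ 1 / 20 * 1 := by gcongr
      _ = _ := by norm_num
  have h4 : |lamM - (c * r₁ + d + s₁)| ≤ 3 / 4 := by
    rw [abs_le] at *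
    constructor <;> linarith
  have h5 : |(r₁' - r₂') * (lamM - (c * r₁ + d + s₁))| ≤ |r₁' - r₂'| * (3 / 4) := by
    rw [abs_mul]; gcongr
  have h6 : |c * (r₁ - r₂)| ≤ 1 / 20 * |r₁ - r₂| := by
    rw [abs_mul]; gcongr
  have h7 : |r₂' * (c * (r₁ - r₂) + (s₁ - s₂))| ≤ 1 * (1 / 20 * |r₁ - r₂| + 2 * ζ) := by
    rw [abs_mul]
    gcongr
    exact (abs_add_le _ _).trans (by linarith)
  have h8 : lamP * |r₁ - r₂| ≤ 1 / 20 * |r₁ - r₂| + 2 * ζ + |r₁' - r₂'| * (3 / 4) +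
      1 * (1 / 20 * |r₁ - r₂| + 2 * ζ) := by
    rw [← abs_of_pos (show 0 < lamP by linarith), ← abs_mul, e]
    refine (abs_sub _ _).trans ?_
    refine add_le_add ((abs_add_le _ _).trans ?_) h7
    refine add_le_add ((abs_add_le _ _).trans ?_) h5
    exact add_le_add h1 h2
  have hz : 0 ≤ ζ := (abs_nonneg _).trans ho₁
  nlinarith [abs_nonneg (r₁ - r₂), abs_nonneg (r₁' - r₂')]

/-- First-order expansion of a coordinate `g` of `G` along the displacements. The coefficients
`a`, `b` depend only on the base point. -/
lemma lin_coord {g : ℝ × ℝ → ℝ} (hd : Differentiable ℝ g)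
    (hl : ∀ y z, |g y - g z| ≤ 1 / 20 * ‖y - z‖) (y : ℝ × ℝ) :
    ∃ a b : ℝ, |a| ≤ 1 / 20 ∧ |b| ≤ 1 / 20 ∧ ∀ ζ > 0, ∃ δ > 0, ∀ z : ℝ × ℝ, ‖z‖ < δ →
      |g (y + z) - g y - (a * dot z vP + b * dot z vM)| ≤ ζ * ‖z‖ := by
  have hL : LipschitzWith (1 / 20) g := LipschitzWith.of_dist_le_mul (fun y z => by
    rw [Real.dist_eq, dist_eq_norm]
    simpa using hl y z)
  set l := fderiv ℝ g y with hldef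
  have hfd : HasFDerivAt g l y := (hd y).hasFDerivAt
  have hn : ‖l‖ ≤ 1 / 20 := by
    simpa using norm_fderiv_le_of_lipschitz ℝ hL (x₀ := y)
  have hb : ∀ v : ℝ × ℝ, ‖v‖ ≤ 1 → |l v| ≤ 1 / 20 := fun v hv => by
    have := l.le_opNorm v
    rw [Real.norm_eq_abs] at this
    nlinarith [norm_nonneg v, norm_nonneg l]
  refine ⟨l vP, l vM, hb _ norm_vP_le, hb _ norm_vM_le, fun ζ hζ => ?_⟩
  have := (hasFDerivAt_iff_isLittleO_nhds_zero.1 hfd).def hζ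
  obtain ⟨δ, hδ, H⟩ := Metric.eventually_nhds_iff.1 this
  refine ⟨δ, hδ, fun z hz => ?_⟩
  have e := H (y := z) (by simpa using hz)
  have ez : l z = l vP * dot z vP + l vM * dot z vM := by
    conv_lhs => rw [eq_dot z]
    rw [map_add, map_smul, map_smul, smul_eq_mul, smul_eq_mul]; ring
  rw [← ez]
  simpa using e

/-- At every base point, the ratio `u / w` oscillates by at most `η` near `t = 0`. -/
def OscLe (h : ℝ × ℝ → ℝ × ℝ) (η : ℝ) : Prop :=
  ∀ x, ∃ δ > 0, ∀ t₁ t₂ : ℝ, t₁ ≠ 0 → t₂ ≠ 0 → |t₁| < δ → |t₂| < δ →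
    |uu h x t₁ / ww h x t₁ - uu h x t₂ / ww h x t₂| ≤ η

lemma disp_tendsto {h : ℝ × ℝ → ℝ × ℝ} (hcont : Continuous h) (x : ℝ × ℝ) {ρ : ℝ} (hρ : 0 < ρ) :
    ∃ δ > 0, ∀ t : ℝ, |t| < δ → ‖disp h x t‖ < ρ := by
  have hc : Continuous (fun t => disp h x t) := by unfold disp; fun_prop
  have h0 : disp h x 0 = 0 := by simp [disp]
  obtain ⟨δ, hδ, H⟩ := Metric.continuous_iff.1 hc 0 ρ hρ
  refine ⟨δ, hδ, fun t ht => ?_⟩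
  have := H t (by simpa using ht)
  rwa [h0, dist_zero_right] at this

lemma osc_step {G h : ℝ × ℝ → ℝ × ℝ} (hc : ConjDiff G h) (hG : SmallLip G)
    (hGd : Differentiable ℝ G) (hcont : Continuous h) {B : ℝ}
    (hB : ∀ x y, ‖h x - h y‖ ≤ B) {η : ℝ} (hη : 0 < η) (ho : OscLe h η) :
    OscLe h (3 / 4 * η) := by
  obtain ⟨l1, l2, l3, l4⟩ := lam_bounds
  intro x
  obtain ⟨a, b, ha, hb, hab⟩ := lin_coord (g := fun y => dot (G y) vP)
    (by unfold dot; fun_prop) (fun y z => by rw [← dot_sub]; exact (hG y z).1) (x + h x)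
  obtain ⟨c, d, hc', hd, hcd⟩ := lin_coord (g := fun y => dot (G y) vM)
    (by unfold dot; fun_prop) (fun y z => by rw [← dot_sub]; exact (hG y z).2) (x + h x)
  -- `4 * ζ ≤ η / 4` leaves `η / 2 + η / 4` for the contraction estimate.
  obtain ⟨ζ, hζ0, hζ1, hζ2⟩ : ∃ ζ : ℝ, 0 < ζ ∧ ζ ≤ 1 / 50 ∧ ζ ≤ η / 16 :=
    ⟨min (1 / 50) (η / 16), by positivity, min_le_left _ _, min_le_right _ _⟩
  obtain ⟨ρ₁, hρ₁, H₁⟩ := hab (ζ / 2) (by positivity)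
  obtain ⟨ρ₂, hρ₂, H₂⟩ := hcd (ζ / 2) (by positivity)
  obtain ⟨δ₁, hδ₁, K₁⟩ := disp_tendsto hcont x hρ₁
  obtain ⟨δ₂, hδ₂, K₂⟩ := disp_tendsto hcont x hρ₂
  obtain ⟨δ₃, hδ₃, K₃⟩ := ho (S0 x)
  have key : ∀ t : ℝ, t ≠ 0 → |t| < δ₁ → |t| < δ₂ → ∃ o s : ℝ, |o| ≤ ζ ∧ |s| ≤ ζ ∧
      lamP * (uu h x t / ww h x t) = (a * (uu h x t / ww h x t) + b + o) +
        (uu h (S0 x) (lamM * t) / ww h (S0 x) (lamM * t)) *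
          (lamM - (c * (uu h x t / ww h x t) + d + s)) := by
    intro t ht ht1 ht2
    have hw := w_ne_zero hc hG hB x ht
    have hw' := w_ne_zero hc hG hB (S0 x) (t := lamM * t) (mul_ne_zero (by linarith) ht)
    have cn := cone hc hG hB x t
    have nd : ‖disp h x t‖ ≤ 2 * |ww h x t| := by
      have := norm_le_dot (disp h x t)
      unfold uu ww at *
      linarith
    have E1 := H₁ _ (K₁ t ht1)
    have E2 := H₂ _ (K₂ t ht2)
    have u1 := uu_step hc x t
    have w1 := ww_step hc x t
    rw [dot_sub] at u1 w1
    change |_ - _ - (a * uu h x t + b * ww h x t)| ≤ _ at E1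
    change |_ - _ - (c * uu h x t + d * ww h x t)| ≤ _ at E2
    have hwp := abs_pos.2 hw
    set P := dot (G (x + h x + disp h x t)) vP - dot (G (x + h x)) vP with hP
    set Q := dot (G (x + h x + disp h x t)) vM - dot (G (x + h x)) vM with hQ
    refine ⟨(P - (a * uu h x t + b * ww h x t)) / ww h x t,
      (Q - (c * uu h x t + d * ww h x t)) / ww h x t, ?_, ?_, ?_⟩
    · rw [abs_div, div_le_iff₀ hwp]
      exact E1.trans (by nlinarith)
    · rw [abs_div, div_le_iff₀ hwp]
      exact E2.trans (by nlinarith)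
    · have e1 : a * (uu h x t / ww h x t) + b +
          (P - (a * uu h x t + b * ww h x t)) / ww h x t = P / ww h x t := by
        field_simp; ring
      have e2 : lamM - (c * (uu h x t / ww h x t) + d +
          (Q - (c * uu h x t + d * ww h x t)) / ww h x t) =
          ww h (S0 x) (lamM * t) / ww h x t := by
        rw [w1]; field_simp; ring
      rw [e1, e2, div_mul_div_cancel₀ hw', u1]
      ring
  have rb : ∀ x t, |uu h x t / ww h x t| ≤ 1 := fun x t => by
    rw [abs_div]
    exact div_le_one_of_le₀ (cone hc hG hB x t) (abs_nonneg _)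
  refine ⟨min δ₁ (min δ₂ δ₃), by positivity, fun t₁ t₂ n1 n2 h1 h2 => ?_⟩
  rw [lt_min_iff, lt_min_iff] at h1 h2
  obtain ⟨o₁, s₁, ho₁, hs₁, e₁⟩ := key t₁ n1 h1.1 h1.2.1
  obtain ⟨o₂, s₂, ho₂, hs₂, e₂⟩ := key t₂ n2 h2.1 h2.2.1
  have R := ratio_contract ha hc' hd hζ1 ho₁ ho₂ hs₁ hs₂ (rb x t₁)
    (rb (S0 x) (lamM * t₂)) e₁ e₂
  have hm : lamM ≠ 0 := by linarith
  have sm : ∀ t : ℝ, |t| < δ₃ → |lamM * t| < δ₃ := fun t ht => by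
    rw [abs_mul, abs_of_neg (show lamM < 0 by linarith)]
    nlinarith [abs_nonneg t]
  have := K₃ (lamM * t₁) (lamM * t₂) (mul_ne_zero hm n1) (mul_ne_zero hm n2)
    (sm _ h1.2.2) (sm _ h2.2.2)
  linarith

lemma ratio_tendsto {G h : ℝ × ℝ → ℝ × ℝ} (hc : ConjDiff G h) (hG : SmallLip G)
    (hGd : Differentiable ℝ G) (hcont : Continuous h) {B : ℝ}
    (hB : ∀ x y, ‖h x - h y‖ ≤ B) (x : ℝ × ℝ) :
    ∃ L, Tendsto (fun t => uu h x t / ww h x t) (nhdsWithin 0 (Set.Ioi 0)) (nhds L) := by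
  have osc : ∀ n : ℕ, OscLe h (2 * (3 / 4) ^ n) := by
    intro n
    induction n with
    | zero =>
      have rb : ∀ x t, |uu h x t / ww h x t| ≤ 1 := fun x t => by
        rw [abs_div]
        exact div_le_one_of_le₀ (cone hc hG hB x t) (abs_nonneg _)
      exact fun x => ⟨1, one_pos, fun t₁ t₂ _ _ _ _ =>
        (abs_sub _ _).trans (by linarith [rb x t₁, rb x t₂])⟩
    | succ n ih =>
      have := osc_step hc hG hGd hcont hB (by positivity) ih
      convert this using 1
      ring
  have lim : Tendsto (fun n : ℕ => 2 * (3 / 4 : ℝ) ^ n) atTop (nhds (2 * 0)) :=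
    (tendsto_pow_atTop_nhds_zero_of_lt_one (by norm_num) (by norm_num)).const_mul _
  rw [mul_zero] at lim
  apply cauchy_map_iff_exists_tendsto.1
  rw [Metric.cauchy_iff]
  refine ⟨inferInstance, fun e he => ?_⟩
  obtain ⟨n, hn⟩ := (lim.eventually_lt_const he).exists
  obtain ⟨δ, hδ, H⟩ := osc n x
  refine ⟨_, image_mem_map (Ioo_mem_nhdsGT hδ), ?_⟩
  rintro _ ⟨t₁, ⟨p1, q1⟩, rfl⟩ _ ⟨t₂, ⟨p2, q2⟩, rfl⟩
  rw [Real.dist_eq]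
  exact (H t₁ t₂ p1.ne' p2.ne' (by rwa [abs_of_pos p1]) (by rwa [abs_of_pos p2])).trans_lt hn

/-! ### Verification of the hypotheses -/

lemma trig_differentiable {g : ℝ × ℝ → ℝ} (hg : IsTrigPoly g) : Differentiable ℝ g := by
  obtain ⟨s, c, hs⟩ := hg
  have e : g = fun p : ℝ × ℝ => Complex.reCLM (∑ n ∈ s, c n *
      Complex.exp (Complex.I * ((n.1 : ℂ) * Complex.ofRealCLM p.1 +
        (n.2 : ℂ) * Complex.ofRealCLM p.2))) := by
    funext p
    simp only [Complex.ofRealCLM_apply, ← hs p, Complex.reCLM_apply, Complex.ofReal_re]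
  rw [e]
  fun_prop

lemma exp_sub_le (a b : ℝ) :
    ‖Complex.exp (Complex.I * a) - Complex.exp (Complex.I * b)‖ ≤ |a - b| := by
  have : Complex.exp (Complex.I * a) - Complex.exp (Complex.I * b) =
      Complex.exp (Complex.I * b) * (Complex.exp (Complex.I * ((a - b : ℝ) : ℂ)) - 1) := by
    rw [mul_sub, ← Complex.exp_add]
    push_cast
    ring_nf
  rw [this, norm_mul, mul_comm Complex.I (b : ℂ), Complex.norm_exp_ofReal_mul_I, one_mul]
  exact Real.norm_exp_I_mul_ofReal_sub_one_le

lemma trig_lipschitz {g : ℝ × ℝ → ℝ} (hg : IsTrigPoly g) :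
    ∃ K : ℝ, 0 ≤ K ∧ ∀ y z, |g y - g z| ≤ K * ‖y - z‖ := by
  obtain ⟨s, c, hs⟩ := hg
  refine ⟨∑ n ∈ s, ‖c n‖ * (|(n.1 : ℝ)| + |(n.2 : ℝ)|), by positivity, fun y z => ?_⟩
  have e : |g y - g z| = ‖(g y : ℂ) - (g z : ℂ)‖ := by
    rw [← Complex.ofReal_sub, Complex.norm_real, Real.norm_eq_abs]
  rw [e, hs, hs, ← Finset.sum_sub_distrib, Finset.sum_mul]
  refine (norm_sum_le _ _).trans (Finset.sum_le_sum fun n _ => ?_)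
  rw [← mul_sub, norm_mul, mul_assoc]
  gcongr
  have := exp_sub_le (n.1 * y.1 + n.2 * y.2) (n.1 * z.1 + n.2 * z.2)
  push_cast at this
  refine this.trans ?_
  have h1 : |y.1 - z.1| ≤ ‖y - z‖ := norm_fst_le (y - z)
  have h2 : |y.2 - z.2| ≤ ‖y - z‖ := norm_snd_le (y - z)
  calc |(n.1 : ℝ) * y.1 + n.2 * y.2 - (n.1 * z.1 + n.2 * z.2)|
      = |(n.1 : ℝ) * (y.1 - z.1) + n.2 * (y.2 - z.2)| := by ring_nf
    _ ≤ |(n.1 : ℝ) * (y.1 - z.1)| + |n.2 * (y.2 - z.2)| := abs_add_le _ _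
    _ = |(n.1 : ℝ)| * |y.1 - z.1| + |(n.2 : ℝ)| * |y.2 - z.2| := by rw [abs_mul, abs_mul]
    _ ≤ |(n.1 : ℝ)| * ‖y - z‖ + |(n.2 : ℝ)| * ‖y - z‖ := by gcongr
    _ = _ := by ring

lemma const_of_int_valued {φ : ℝ × ℝ → ℝ} (hφ : Continuous φ)
    (hi : ∀ x, ∃ n : ℤ, φ x = 2 * Real.pi * n) (x y : ℝ × ℝ) : φ x = φ y := by
  choose n hn using hi
  have hc : Continuous n := by
    rw [Int.isClosedEmbedding_coe_real.isInducing.continuous_iff]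
    have : (Int.cast ∘ n : ℝ × ℝ → ℝ) = fun x => φ x / (2 * Real.pi) := by
      funext x
      have := Real.pi_pos
      rw [hn x, Function.comp]
      field_simp
    rw [this]
    fun_prop
  rw [hn, hn, PreconnectedSpace.constant inferInstance hc (x := x) (y := y)]

/-- The conjugacy holds for differences without an integer error: the integer vector in the conjugacy
condition is a continuous function of the point, hence constant. -/
lemma conj_sub {G h : ℝ × ℝ → ℝ × ℝ} (hG : Continuous G) (hh : Continuous h)
    (hconj : ∀ x : ℝ × ℝ, ∃ m : ℤ × ℤ, (S0 x + h (S0 x)) - (S0 (x + h x) - G (x + h x))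
        = (2 * Real.pi * m.1, 2 * Real.pi * m.2)) : ConjDiff G h := by
  have hS : Continuous S0 := by unfold S0; fun_prop
  have hE : Continuous fun x => (S0 x + h (S0 x)) - (S0 (x + h x) - G (x + h x)) := by fun_prop
  intro x y
  have e : (S0 x + h (S0 x)) - (S0 (x + h x) - G (x + h x)) =
      (S0 y + h (S0 y)) - (S0 (y + h y) - G (y + h y)) := by
    apply Prod.ext
    · exact const_of_int_valued (continuous_fst.comp hE)
        (fun x => (hconj x).imp' Prod.fst fun m hm => by simp only [Function.comp, hm]) x y
    · exact const_of_int_valued (continuous_snd.comp hE)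
        (fun x => (hconj x).imp' Prod.snd fun m hm => by simp only [Function.comp, hm]) x y
  have hsub : S0 ((y + h y) - (x + h x)) = S0 (y + h y) - S0 (x + h x) := by
    ext <;> simp only [S0, Prod.fst_sub, Prod.snd_sub]
    ring
  rw [hsub]
  have e' := sub_eq_zero.2 e
  rw [← sub_eq_zero, ← neg_eq_zero, ← e']
  abel

lemma osc_bounded {h : ℝ × ℝ → ℝ × ℝ} {C β : ℝ} (hC : 0 < C) (hβ : 0 < β)
    (hper : ∀ x : ℝ × ℝ, ∀ m : ℤ × ℤ, h (x + (2 * Real.pi * m.1, 2 * Real.pi * m.2)) = h x)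
    (hH : ∀ x y : ℝ × ℝ, dist (h x) (h y) ≤ C * dist x y ^ β) (x y : ℝ × ℝ) :
    ‖h x - h y‖ ≤ C * (2 * Real.pi) ^ β := by
  have hp : 0 < 2 * Real.pi := by positivity
  have aux : ∀ a b : ℝ, |a + 2 * Real.pi * (⌊(b - a) / (2 * Real.pi)⌋ : ℝ) - b| ≤ 2 * Real.pi := by
    intro a b
    have f1 := Int.floor_le ((b - a) / (2 * Real.pi))
    have f2 := (Int.lt_floor_add_one ((b - a) / (2 * Real.pi))).le
    rw [le_div_iff₀ hp] at f1
    rw [div_le_iff₀ hp] at f2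
    rw [abs_le]
    constructor <;> nlinarith
  rw [← hper x (⌊(y.1 - x.1) / (2 * Real.pi)⌋, ⌊(y.2 - x.2) / (2 * Real.pi)⌋), ← dist_eq_norm]
  refine (hH _ _).trans ?_
  gcongr
  rw [Prod.dist_eq, sup_le_iff]
  exact ⟨aux _ _, aux _ _⟩

theorem stmt0
    (f : ℝ × ℝ → ℝ × ℝ)
    (hf1 : IsTrigPoly (fun p => (f p).1)) (hf2 : IsTrigPoly (fun p => (f p).2))
    (ε₀ β C : ℝ) (hε₀ : 0 < ε₀) (hβ : β ∈ Set.Ioo (0 : ℝ) 1) (hC : 0 < C)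
    (h : ℝ → (ℝ × ℝ) → (ℝ × ℝ))
    (hcont : ∀ ε ∈ Set.Ioo (-ε₀) ε₀, Continuous (h ε))
    (hper : ∀ ε ∈ Set.Ioo (-ε₀) ε₀, ∀ x : ℝ × ℝ, ∀ m : ℤ × ℤ,
      h ε (x + (2 * Real.pi * m.1, 2 * Real.pi * m.2)) = h ε x)
    (h0 : h 0 = 0)
    (hHolder : ∀ ε ∈ Set.Ioo (-ε₀) ε₀, ∀ x y : ℝ × ℝ,
      dist (h ε x) (h ε y) ≤ C * dist x y ^ β)
    (hanal : ∀ x : ℝ × ℝ, ∀ ε ∈ Set.Ioo (-ε₀) ε₀, AnalyticAt ℝ (fun e => h e x) ε)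
    (hconj : ∀ ε ∈ Set.Ioo (-ε₀) ε₀, ∀ x : ℝ × ℝ, ∃ m : ℤ × ℤ,
      (S0 x + h ε (S0 x)) - (S0 (x + h ε x) - ε • f (x + h ε x))
        = (2 * Real.pi * m.1, 2 * Real.pi * m.2)) :
    ∃ D : ℝ, 0 < D ∧ D ≤ ε₀ ∧ ∀ ε : ℝ, |ε| < D → ∀ x : ℝ × ℝ, ∃ L : ℝ,
      Filter.Tendsto
        (fun t : ℝ =>
          dot (t⁻¹ • (t • vM + h ε (x + t • vM) - h ε x)) vP /
          dot (t⁻¹ • (t • vM + h ε (x + t • vM) - h ε x)) vM)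
        (nhdsWithin 0 (Set.Ioi 0)) (nhds L) := by
  obtain ⟨K₁, hK₁, L₁⟩ := trig_lipschitz hf1
  obtain ⟨K₂, hK₂, L₂⟩ := trig_lipschitz hf2
  have hfd : Differentiable ℝ f := (trig_differentiable hf1).prodMk (trig_differentiable hf2)
  -- For this `D`, `ε f` has sup-norm Lipschitz constant at most `1/40` when `|ε| < D`; the
  -- coordinates in the basis `(v₊, v₋)` cost a factor `2`.
  refine ⟨min ε₀ (1 / (40 * (K₁ + K₂ + 1))), by positivity, min_le_left _ _, ?_⟩
  intro ε hε x
  obtain ⟨hε1, hε2⟩ := lt_min_iff.1 hε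
  have hmem : ε ∈ Set.Ioo (-ε₀) ε₀ := ⟨(abs_lt.1 hε1).1, (abs_lt.1 hε1).2⟩
  have hεK : |ε| * (K₁ + K₂) ≤ 1 / 40 := by
    rw [lt_div_iff₀ (by positivity)] at hε2
    nlinarith [abs_nonneg ε]
  have hlip : ∀ y z : ℝ × ℝ, ‖ε • f y - ε • f z‖ ≤ 1 / 40 * ‖y - z‖ := by
    intro y z
    rw [← smul_sub, norm_smul, Real.norm_eq_abs]
    have : ‖f y - f z‖ ≤ (K₁ + K₂) * ‖y - z‖ := by
      rw [Prod.norm_def, sup_le_iff]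
      constructor
      · exact (L₁ y z).trans (by gcongr; linarith)
      · exact (L₂ y z).trans (by gcongr; linarith)
    calc |ε| * ‖f y - f z‖ ≤ |ε| * ((K₁ + K₂) * ‖y - z‖) := by gcongr
      _ = |ε| * (K₁ + K₂) * ‖y - z‖ := by ring
      _ ≤ _ := by gcongr
  have hG : SmallLip (fun y => ε • f y) := fun y z =>
    ⟨(abs_dot_le norm_vP_le).trans (by linarith [hlip y z]),
      (abs_dot_le norm_vM_le).trans (by linarith [hlip y z])⟩
  have hGd : Differentiable ℝ (fun y => ε • f y) := hfd.const_smul ε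
  have hc : ConjDiff (fun y => ε • f y) (h ε) :=
    conj_sub hGd.continuous (hcont ε hmem) (hconj ε hmem)
  obtain ⟨L, hL⟩ := ratio_tendsto hc hG hGd (hcont ε hmem)
    (osc_bounded hC hβ.1 (hper ε hmem) (hHolder ε hmem)) x
  refine ⟨L, hL.congr' ?_⟩
  filter_upwards [self_mem_nhdsWithin] with t ht
  have ht0 : t⁻¹ ≠ 0 := inv_ne_zero (ne_of_gt ht)
  rw [dot_smul, dot_smul, mul_div_mul_left _ _ ht0]
  rfl
end
end

section
/- For every x ∈ ℝ², the unstable set of the linear automorphism S at π x is exactly the projected line through x in the expanding eigendirection: W^u_S(π x) = { π(x + t v₊) : t ∈ ℝ }. -/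
/-!
The statement is reduced to the difference `D n = S⁻ⁿ y - S⁻ⁿ (π x)`, which satisfies
`S (D (n + 1)) = D n` because `S` is additive.

If `D n → 0`, choose lifts `r n ∈ ℝ²` of `D n` of the same norm. The defect
`S₀ (r (n + 1)) - r n` lies in the lattice `2πℤ²` and tends to `0`, so it vanishes from some `N` on:
the lifts eventually form a genuine backward orbit of `S₀` tending to `0`. The linear functional
`ell p = p.1 - λ₊ p.2`, which kills `v₊` and is multiplied by `λ₋` under `S₀`, must then vanish at
`r N` since `|λ₋| ≤ 1` (`ell_eq_zero_of_orbit`), that is, `r N` is a multiple of `v₊`. Pushing forward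
by `S^N` shows that `y - π x = D 0` is the projection of a multiple of `v₊`.

Conversely, `S⁻ⁿ` multiplies the displacement `t v₊` by `λ₊⁻ⁿ`, which tends to `0`.
-/

noncomputable section
open Real Filter Metric

/-- The linear functional on `ℝ²` with kernel `ℝ v₊`; it is a left eigenvector of `S0` for `λ₋`. -/
def ell (p : ℝ × ℝ) : ℝ := p.1 - lamP * p.2

lemma lamP_sq : lamP ^ 2 = lamP + 1 := by
  have h : Real.sqrt 5 ^ 2 = 5 := Real.sq_sqrt (by norm_num)
  unfold lamP
  nlinarith

lemma one_lt_lamP : 1 < lamP := by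
  have h : 1 < Real.sqrt 5 := by
    rw [Real.lt_sqrt] <;> norm_num
  unfold lamP
  linarith

lemma lamM_eq : lamM = 1 - lamP := by
  unfold lamM lamP
  ring

lemma abs_lamM_le_one : |lamM| ≤ 1 := by
  have h := lamP_sq
  have h1 := one_lt_lamP
  rw [lamM_eq, abs_le]
  constructor <;> nlinarith

lemma ell_S0 (p : ℝ × ℝ) : ell (S0 p) = lamM * ell p := by
  rw [lamM_eq]
  simp only [ell, S0]
  linear_combination (-p.2) * lamP_sq

lemma continuous_ell : Continuous ell := by
  unfold ell
  fun_prop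

lemma continuous_S0 : Continuous S0 := by
  unfold S0
  fun_prop

lemma S0_add (p q : ℝ × ℝ) : S0 (p + q) = S0 p + S0 q := by
  ext <;> simp [S0]
  ring

lemma S0_smul_vP (c : ℝ) : S0 (c • vP) = (lamP * c) • vP := by
  ext <;> simp only [S0, vP, Prod.smul_mk, smul_eq_mul]
  · field_simp
    linear_combination -c * lamP_sq
  · ring

lemma exists_smul_vP_of_ell_eq_zero {p : ℝ × ℝ} (h : ell p = 0) : ∃ t : ℝ, p = t • vP := by
  have hs : Real.sqrt (lamP ^ 2 + 1) ≠ 0 := (Real.sqrt_pos.2 (by positivity)).ne'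
  have h1 : p.1 = lamP * p.2 := by
    unfold ell at h
    linarith
  refine ⟨p.2 * Real.sqrt (lamP ^ 2 + 1), ?_⟩
  ext <;> simp only [vP, Prod.smul_mk, smul_eq_mul]
  · rw [h1]
    field_simp
  · field_simp

/-- A backward `S0`-orbit tending to `0` lies on the expanding line. -/
lemma ell_eq_zero_of_orbit {r : ℕ → ℝ × ℝ} (hr : Tendsto r atTop (nhds 0))
    (h : ∀ n, S0 (r (n + 1)) = r n) : ell (r 0) = 0 := by
  have hb : ∀ n, |ell (r 0)| ≤ |ell (r n)| := by
    intro n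
    induction n with
    | zero => exact le_rfl
    | succ n ih =>
      refine ih.trans ?_
      rw [← h n, ell_S0, abs_mul]
      exact mul_le_of_le_one_left (abs_nonneg _) abs_lamM_le_one
  have ht : Tendsto (fun n => |ell (r n)|) atTop (nhds 0) := by
    have := ((continuous_ell.tendsto 0).comp hr).abs
    simpa [ell] using this
  exact abs_nonpos_iff.1 (ge_of_tendsto' ht hb)

lemma pr2_add (p q : ℝ × ℝ) : pr2 (p + q) = pr2 p + pr2 q := by
  ext <;> simp [pr2]

lemma pr2_sub (p q : ℝ × ℝ) : pr2 (p - q) = pr2 p - pr2 q := by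
  ext <;> simp [pr2]

lemma continuous_pr2 : Continuous pr2 := by
  unfold pr2
  exact ((AddCircle.continuous_mk' _).comp continuous_fst).prodMk
    ((AddCircle.continuous_mk' _).comp continuous_snd)

lemma exists_circle_lift (u : AddCircle (2 * Real.pi)) :
    ∃ r : ℝ, (r : AddCircle (2 * Real.pi)) = u ∧ |r| = ‖u‖ := by
  induction u using QuotientAddGroup.induction_on with
  | H x =>
    refine ⟨x - round ((2 * Real.pi)⁻¹ * x) * (2 * Real.pi), ?_, (AddCircle.norm_eq _).symm⟩
    rw [AddCircle.coe_sub, sub_eq_self, AddCircle.coe_eq_zero_iff]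
    exact ⟨round ((2 * Real.pi)⁻¹ * x), by simp⟩

lemma exists_lift (u : T2) : ∃ r : ℝ × ℝ, pr2 r = u ∧ ‖r‖ = ‖u‖ := by
  obtain ⟨a, ha, ha'⟩ := exists_circle_lift u.1
  obtain ⟨b, hb, hb'⟩ := exists_circle_lift u.2
  refine ⟨(a, b), Prod.ext ha hb, ?_⟩
  rw [Prod.norm_def, Prod.norm_def, Real.norm_eq_abs, Real.norm_eq_abs, ha', hb']

lemma eq_zero_of_circle_coe {a : ℝ} (h : (a : AddCircle (2 * Real.pi)) = 0) (ha : |a| < 1) :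
    a = 0 := by
  have hp := Real.pi_gt_three
  have : ‖(a : AddCircle (2 * Real.pi))‖ = |a| := by
    rw [AddCircle.norm_coe_eq_abs_iff _ Real.two_pi_pos.ne', abs_of_pos Real.two_pi_pos]
    linarith
  rw [h, norm_zero] at this
  exact abs_eq_zero.1 this.symm

/-- The lattice `2πℤ²` meets the unit ball only at the origin. -/
lemma eq_zero_of_pr2 {p : ℝ × ℝ} (h : pr2 p = 0) (hp : ‖p‖ < 1) : p = 0 := by
  rw [Prod.norm_def, max_lt_iff] at hp
  exact Prod.ext (eq_zero_of_circle_coe (congrArg Prod.fst h) hp.1)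
    (eq_zero_of_circle_coe (congrArg Prod.snd h) hp.2)

lemma S_add {S : T2 ≃ₜ T2} (hS : ∀ x : ℝ × ℝ, S (pr2 x) = pr2 (S0 x)) (u v : T2) :
    S (u + v) = S u + S v := by
  obtain ⟨p, rfl, -⟩ := exists_lift u
  obtain ⟨q, rfl, -⟩ := exists_lift v
  rw [← pr2_add, hS, hS, hS, S0_add, pr2_add]

lemma iterate_symm_add_smul_vP {S : T2 ≃ₜ T2} (hS : ∀ x : ℝ × ℝ, S (pr2 x) = pr2 (S0 x))
    (u : T2) (t : ℝ) (n : ℕ) :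
    S.symm^[n] (u + pr2 (t • vP)) = S.symm^[n] u + pr2 ((lamP⁻¹ ^ n * t) • vP) := by
  have h0 : lamP ≠ 0 := (zero_lt_one.trans one_lt_lamP).ne'
  induction n with
  | zero => simp
  | succ n ih =>
    rw [Function.iterate_succ_apply', Function.iterate_succ_apply', ih, Homeomorph.symm_apply_eq,
      S_add hS, hS, S0_smul_vP, Homeomorph.apply_symm_apply]
    have h1 : lamP * (lamP⁻¹ ^ (n + 1) * t) = lamP⁻¹ ^ n * t := by
      rw [pow_succ']
      field_simp
    rw [h1]

/-- A backward `S`-orbit tending to `0` in the torus starts on the projected expanding line. -/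
lemma exists_of_tendsto {S : T2 ≃ₜ T2} (hS : ∀ x : ℝ × ℝ, S (pr2 x) = pr2 (S0 x))
    {D : ℕ → T2} (hD : ∀ n, S (D (n + 1)) = D n)
    (hlim : Tendsto (fun n => ‖D n‖) atTop (nhds 0)) : ∃ t : ℝ, D 0 = pr2 (t • vP) := by
  choose r hr hrn using fun n => exists_lift (D n)
  have hr0 : Tendsto r atTop (nhds 0) := by
    rw [tendsto_zero_iff_norm_tendsto_zero]
    simpa only [hrn] using hlim
  have hdef : Tendsto (fun n => ‖S0 (r (n + 1)) - r n‖) atTop (nhds 0) := by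
    have h1 := (continuous_S0.tendsto 0).comp (hr0.comp (tendsto_add_atTop_nat 1))
    have h2 := (h1.sub hr0).norm
    simpa [S0] using h2
  obtain ⟨N, hN⟩ := eventually_atTop.1 (hdef.eventually_lt_const one_pos)
  have horb : ∀ n, S0 (r (N + (n + 1))) = r (N + n) := by
    intro n
    refine sub_eq_zero.1 (eq_zero_of_pr2 ?_ (hN (N + n) (Nat.le_add_right _ _)))
    rw [pr2_sub, ← hS, hr, hr, ← add_assoc, hD, sub_self]
  have hshift : Tendsto (fun n => r (N + n)) atTop (nhds 0) := by
    simpa only [Function.comp_def, add_comm] using hr0.comp (tendsto_add_atTop_nat N)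
  obtain ⟨t, ht⟩ := exists_smul_vP_of_ell_eq_zero (ell_eq_zero_of_orbit hshift horb)
  have hDN : ∃ t : ℝ, D N = pr2 (t • vP) := ⟨t, by rw [← ht]; exact (hr N).symm⟩
  clear ht horb hshift hN
  induction N with
  | zero => exact hDN
  | succ N ih =>
    obtain ⟨s, hs⟩ := hDN
    exact ih ⟨lamP * s, by rw [← hD, hs, hS, S0_smul_vP]⟩

theorem stmt5
    (S : T2 ≃ₜ T2) (hS : ∀ x : ℝ × ℝ, S (pr2 x) = pr2 (S0 x)) :
    ∀ x : ℝ × ℝ,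
      {y : T2 | Filter.Tendsto (fun n : ℕ =>
          dist (S.symm^[n] y) (S.symm^[n] (pr2 x))) atTop (nhds 0)}
        = {y : T2 | ∃ t : ℝ, y = pr2 (x + t • vP)} := by
  intro x
  ext y
  simp only [Set.mem_ofPred_eq, dist_eq_norm]
  constructor
  · intro h
    have hD : ∀ n : ℕ, S (S.symm^[n + 1] y - S.symm^[n + 1] (pr2 x))
        = S.symm^[n] y - S.symm^[n] (pr2 x) := by
      intro n
      rw [eq_sub_iff_add_eq]
      have h2 : S.symm^[n] (pr2 x) = S (S.symm^[n + 1] (pr2 x)) := by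
        rw [Function.iterate_succ_apply', Homeomorph.apply_symm_apply]
      rw [h2, ← S_add hS, sub_add_cancel, Function.iterate_succ_apply',
        Homeomorph.apply_symm_apply]
    obtain ⟨t, ht⟩ := exists_of_tendsto hS (D := fun n => S.symm^[n] y - S.symm^[n] (pr2 x)) hD h
    refine ⟨t, ?_⟩
    rw [pr2_add, ← ht]
    simp
  · rintro ⟨t, rfl⟩
    simp only [pr2_add, iterate_symm_add_smul_vP hS, add_sub_cancel_left]
    have h1 : Tendsto (fun n : ℕ => lamP⁻¹ ^ n) atTop (nhds 0) :=
      tendsto_pow_atTop_nhds_zero_of_lt_one (inv_nonneg.2 (zero_le_one.trans one_lt_lamP.le))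
        (inv_lt_one_of_one_lt₀ one_lt_lamP)
    have h2 : Tendsto (fun n : ℕ => (lamP⁻¹ ^ n * t) • vP) atTop (nhds 0) := by
      simpa using (h1.mul_const t).smul_const vP
    have h3 := ((continuous_pr2.tendsto 0).comp h2).norm
    have h4 : pr2 0 = 0 := by ext <;> simp [pr2]
    rw [h4, norm_zero] at h3
    exact h3
end
end

section
/- Let r ≥ 1 be an integer and x ∈ (0,1). Then the family indexed by (n₁,…,n_r) ∈ ℕ^r with terms (∏_{j=1}^{r} (n₁ + n₂ + ⋯ + n_j)) · x^{n₁+⋯+n_r} is summable, and its sum satisfies Σ_{(n₁,…,n_r)∈ℕ^r} (∏_{j=1}^{r} (n₁+⋯+n_j)) x^{n₁+⋯+n_r} ≤ ( Σ_{m=0}^{∞} (m+1)^r x^m )^r, the series on the right being convergent. -/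
open Finset

/-!
Each partial sum `n₁ + ⋯ + n_j` is at most `∏ i, (n_i + 1)`, so each term of the series is at most
`∏ i, (n_i + 1) ^ r * x ^ n_i`. A finite set of multi-indices lies in the box formed by its
coordinate projections; over a box the sum of these products is a product of `r` finite partial
sums of `∑ m, (m + 1) ^ r * x ^ m`. Hence every finite partial sum of the nonnegative left-hand
series is at most the `r`-th power of that convergent series, which gives both summability and the
bound.
-/

lemma sum_le_prod_add_one {ι : Type*} (s : Finset ι) (n : ι → ℕ) :
    ∑ i ∈ s, n i ≤ ∏ i ∈ s, (n i + 1) := by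
  classical
  have h : ∑ i ∈ s, n i + 1 ≤ ∏ i ∈ s, (n i + 1) := by
    induction s using Finset.induction_on with
    | empty => simp
    | insert a s ha ih =>
      rw [Finset.sum_insert ha, Finset.prod_insert ha]
      nlinarith [Nat.zero_le (n a * ∑ i ∈ s, n i), Nat.mul_le_mul_left (n a + 1) ih]
  omega

lemma summable_add_one_pow_mul (r : ℕ) (x : ℝ) (hx : x ∈ Set.Ioo (0 : ℝ) 1) :
    Summable (fun m : ℕ => ((m : ℝ) + 1) ^ r * x ^ m) := by
  have h := summable_pow_mul_geometric_of_norm_lt_one r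
    (show ‖x‖ < 1 by rw [Real.norm_of_nonneg hx.1.le]; exact hx.2)
  -- The shifted series `∑ (m + 1) ^ r * x ^ (m + 1)` differs by the factor `x ≠ 0`.
  refine (((summable_nat_add_iff 1).2 h).mul_left x⁻¹).congr fun m => ?_
  have := hx.1.ne'
  push_cast
  field_simp
  ring

lemma term_le_prod (r : ℕ) (x : ℝ) (hx : 0 ≤ x) (n : Fin r → ℕ) :
    (∏ j : Fin r, ((∑ i ∈ Finset.Iic j, n i : ℕ) : ℝ)) * x ^ (∑ i : Fin r, n i)
      ≤ ∏ i : Fin r, (((n i : ℝ) + 1) ^ r * x ^ n i) := by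
  rw [Finset.prod_mul_distrib, Finset.prod_pow_eq_pow_sum, Finset.prod_pow]
  refine mul_le_mul_of_nonneg_right ?_ (by positivity)
  have key : ∏ j : Fin r, (∑ i ∈ Finset.Iic j, n i) ≤ (∏ i : Fin r, (n i + 1)) ^ r := by
    calc _ ≤ ∏ _j : Fin r, ∏ i : Fin r, (n i + 1) :=
          Finset.prod_le_prod' fun j _ =>
            (Finset.sum_le_sum_of_subset (Finset.subset_univ _)).trans (sum_le_prod_add_one _ n)
      _ = _ := by simp
  exact_mod_cast key

theorem stmt15 (r : ℕ) (hr : 1 ≤ r) (x : ℝ) (hx : x ∈ Set.Ioo (0 : ℝ) 1) :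
    Summable (fun n : Fin r → ℕ =>
      (∏ j : Fin r, ((∑ i ∈ Finset.Iic j, n i : ℕ) : ℝ)) * x ^ (∑ i : Fin r, n i)) ∧
    Summable (fun m : ℕ => ((m : ℝ) + 1) ^ r * x ^ m) ∧
    (∑' n : Fin r → ℕ,
        (∏ j : Fin r, ((∑ i ∈ Finset.Iic j, n i : ℕ) : ℝ)) * x ^ (∑ i : Fin r, n i))
      ≤ (∑' m : ℕ, ((m : ℝ) + 1) ^ r * x ^ m) ^ r := by
  have hx0 : 0 ≤ x := hx.1.le
  have hs := summable_add_one_pow_mul r x hx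
  have hnn : ∀ n : Fin r → ℕ, 0 ≤
      (∏ j : Fin r, ((∑ i ∈ Finset.Iic j, n i : ℕ) : ℝ)) * x ^ (∑ i : Fin r, n i) :=
    fun n => by positivity
  have hb : ∀ s : Finset (Fin r → ℕ), ∑ n ∈ s,
      (∏ j : Fin r, ((∑ i ∈ Finset.Iic j, n i : ℕ) : ℝ)) * x ^ (∑ i : Fin r, n i)
      ≤ (∑' m : ℕ, ((m : ℝ) + 1) ^ r * x ^ m) ^ r := by
    intro s
    calc _ ≤ ∑ n ∈ s, ∏ i : Fin r, (((n i : ℝ) + 1) ^ r * x ^ n i) :=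
          Finset.sum_le_sum fun n _ => term_le_prod r x hx0 n
      _ ≤ ∑ n ∈ Fintype.piFinset (fun i : Fin r => (s.image (fun n => n i) : Finset ℕ)),
            ∏ i : Fin r, (((n i : ℝ) + 1) ^ r * x ^ n i) := by
          refine Finset.sum_le_sum_of_subset_of_nonneg (fun n hn => ?_) fun n _ _ => by positivity
          exact Fintype.mem_piFinset.2 fun i => Finset.mem_image_of_mem _ hn
      _ = ∏ i : Fin r, ∑ m ∈ (s.image (fun n => n i) : Finset ℕ), ((m : ℝ) + 1) ^ r * x ^ m :=
          (Finset.prod_univ_sum _ fun _ (m : ℕ) => ((m : ℝ) + 1) ^ r * x ^ m).symm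
      _ ≤ ∏ _i : Fin r, ∑' m : ℕ, ((m : ℝ) + 1) ^ r * x ^ m :=
          Finset.prod_le_prod (fun i _ => Finset.sum_nonneg fun m _ => by positivity)
            fun i _ => hs.sum_le_tsum _ fun m _ => by positivity
      _ = _ := by simp
  exact ⟨summable_of_sum_le hnn hb, hs, Real.tsum_le_of_sum_le hnn hb⟩
end
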